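/- There exists a constant K > 0 such that for every R ≥ max(R₀, 1) one has Ê(R) ≥ 0 and the differential inequality dÊ/dR(R) ≤ −Ê(R)/R + K Ê(R)/R² + K Ê(R)^{3/2}/R. -/

import Mathlib

open Real MeasureTheory Set

/-- Partial derivative with respect to the first (time) variable `R`. -/
noncomputable def pdR (f : ℝ → ℝ → ℝ) (R θ : ℝ) : ℝ := deriv (fun r => f r θ) R

/-- Partial derivative with respect to the second (space) variable `θ`. -/
noncomputable def pdT (f : ℝ → ℝ → ℝ) (R θ : ℝ) : ℝ := deriv (fun t => f R t) θ


theorem diffInt (F F' : ℝ → ℝ → ℝ) (hF : Continuous (Function.uncurry F))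
    (hF' : Continuous (Function.uncurry F'))
    (h : ∀ R θ, HasDerivAt (fun r => F r θ) (F' R θ) R) (R : ℝ) :
    HasDerivAt (fun r => ∫ θ in (0:ℝ)..(2 * π), F r θ) (∫ θ in (0:ℝ)..(2 * π), F' R θ) R := by
  have hc : IsCompact (Icc (R-1) (R+1) ×ˢ uIcc (0:ℝ) (2*π)) := isCompact_Icc.prod isCompact_uIcc
  obtain ⟨C, hC⟩ := hc.exists_bound_of_continuousOn hF'.continuousOn
  have c1 : ∀ r, Continuous (F r) := fun r => hF.comp (by fun_prop : Continuous fun t : ℝ => (r, t))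
  have c2 : ∀ r, Continuous (F' r) :=
    fun r => hF'.comp (by fun_prop : Continuous fun t : ℝ => (r, t))
  refine (intervalIntegral.hasDerivAt_integral_of_dominated_loc_of_deriv_le
    (s := Icc (R-1) (R+1)) (bound := fun _ => C) (F := F) (F' := F')
    (Icc_mem_nhds (by linarith) (by linarith)) ?_ ?_ ?_ ?_ ?_ ?_).2
  · exact Filter.Eventually.of_forall fun r => (c1 r).aestronglyMeasurable
  · exact (c1 R).intervalIntegrable _ _
  · exact (c2 R).aestronglyMeasurable
  · exact Filter.Eventually.of_forall fun t ht r hr => hC (r, t) ⟨hr, uIoc_subset_uIcc ht⟩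
  · exact intervalIntegrable_const
  · exact Filter.Eventually.of_forall fun t _ r _ => h r t

theorem lin4 (a1 a2 a3 a4 : ℝ) (f1 f2 f3 f4 F : ℝ → ℝ) (h1 : Continuous f1) (h2 : Continuous f2)
    (h3 : Continuous f3) (h4 : Continuous f4)
    (h : ∀ t, F t = a1 * f1 t + a2 * f2 t + a3 * f3 t + a4 * f4 t) :
    ∫ t in (0:ℝ)..(2 * π), F t = a1 * (∫ t in (0:ℝ)..(2 * π), f1 t)
      + a2 * (∫ t in (0:ℝ)..(2 * π), f2 t) + a3 * (∫ t in (0:ℝ)..(2 * π), f3 t)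
      + a4 * (∫ t in (0:ℝ)..(2 * π), f4 t) := by
  rw [show F = fun t => a1 * f1 t + a2 * f2 t + a3 * f3 t + a4 * f4 t from funext h]
  rw [intervalIntegral.integral_add, intervalIntegral.integral_add, intervalIntegral.integral_add]
  · simp only [intervalIntegral.integral_const_mul]
  all_goals exact Continuous.intervalIntegrable (by fun_prop) _ _

theorem intMono (f g : ℝ → ℝ) (hf : Continuous f) (hg : Continuous g) (h : ∀ t, f t ≤ g t) :
    ∫ t in (0:ℝ)..(2 * π), f t ≤ ∫ t in (0:ℝ)..(2 * π), g t :=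
  intervalIntegral.integral_mono (by positivity) (hf.intervalIntegrable _ _)
    (hg.intervalIntegrable _ _) h

theorem wirt (f f' : ℝ → ℝ) (hf : ∀ t, HasDerivAt f (f' t) t) (hf' : Continuous f')
    (hp : ∀ t, f (t + 2 * π) = f t) (x : ℝ) :
    (f x - 1 / (2 * π) * ∫ t in (0:ℝ)..(2 * π), f t) ^ 2
      ≤ π / 6 * ∫ t in (0:ℝ)..(2 * π), f' t ^ 2 := by
  have hper : Function.Periodic f (2 * π) := hp
  have hper' : ∀ t, f' (t + 2 * π) = f' t := by
    intro t
    have h1 := (hf (t + 2 * π)).comp_add_const t (2 * π)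
    rw [show (fun x => f (x + 2 * π)) = f from funext hp] at h1
    exact h1.unique (hf t)
  have hper2 : Function.Periodic (fun t => f' t ^ 2) (2 * π) := fun t => by
    show f' (t + 2 * π) ^ 2 = _
    rw [hper']
  have hfc : Continuous f := continuous_iff_continuousAt.2 fun t => (hf t).continuousAt
  have e1 : ∫ t in x..(x + 2 * π), f t = ∫ t in (0:ℝ)..(2 * π), f t := by
    have := hper.intervalIntegral_add_eq x 0
    simpa using this
  have e2 : ∫ t in x..(x + 2 * π), f' t ^ 2 = ∫ t in (0:ℝ)..(2 * π), f' t ^ 2 := by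
    have := hper2.intervalIntegral_add_eq x 0
    simpa using this
  have e3 : ∫ t in x..(x + 2 * π), (t - x - π) * f' t
      = 2 * π * f x - ∫ t in (0:ℝ)..(2 * π), f t := by
    rw [intervalIntegral.integral_mul_deriv_eq_deriv_mul (u := fun t => t - x - π)
      (u' := fun _ => 1) (v := f)]
    · simp only [one_mul, e1, hp]; ring
    · intro t _; exact ((hasDerivAt_id t).sub_const x).sub_const π
    · intro t _; exact hf t
    · exact intervalIntegrable_const
    · exact hf'.intervalIntegrable _ _
  have e4 : ∫ t in x..(x + 2 * π), (t - x - π) ^ 2 = 2 * π ^ 3 / 3 := by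
    have : ∀ t ∈ uIcc x (x + 2 * π), HasDerivAt (fun t => (t - x - π) ^ 3 / 3)
        ((t - x - π) ^ 2) t := by
      intro t _
      have := ((((hasDerivAt_id t).sub_const x).sub_const π).fun_pow 3).div_const 3
      refine this.congr_deriv ?_
      simp
    rw [intervalIntegral.integral_eq_sub_of_hasDerivAt this
      (Continuous.intervalIntegrable (by fun_prop) _ _)]
    ring
  set B := 2 * π * f x - ∫ t in (0:ℝ)..(2 * π), f t with hB
  set Q := ∫ t in (0:ℝ)..(2 * π), f' t ^ 2 with hQ
  have hpi := Real.pi_pos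
  have key : 0 ≤ ∫ t in x..(x + 2 * π), (2 * π ^ 3 / 3 * f' t - B * (t - x - π)) ^ 2 :=
    intervalIntegral.integral_nonneg (by linarith) fun t _ => sq_nonneg _
  have e5 : ∫ t in x..(x + 2 * π), (2 * π ^ 3 / 3 * f' t - B * (t - x - π)) ^ 2
      = (2 * π ^ 3 / 3) ^ 2 * Q - 2 * (2 * π ^ 3 / 3) * B * B + B ^ 2 * (2 * π ^ 3 / 3) := by
    rw [show (fun t => (2 * π ^ 3 / 3 * f' t - B * (t - x - π)) ^ 2) = fun t =>
      (2 * π ^ 3 / 3) ^ 2 * f' t ^ 2 - 2 * (2 * π ^ 3 / 3) * B * ((t - x - π) * f' t)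
        + B ^ 2 * (t - x - π) ^ 2 from funext fun t => by ring]
    rw [intervalIntegral.integral_add, intervalIntegral.integral_sub]
    · simp only [intervalIntegral.integral_const_mul, e2, e3, e4]
    all_goals exact Continuous.intervalIntegrable (by fun_prop) _ _
  rw [e5] at key
  have k2 : B ^ 2 ≤ 2 * π ^ 3 / 3 * Q := by
    have : 0 ≤ (2 * π ^ 3 / 3) * (2 * π ^ 3 / 3 * Q - B ^ 2) := by nlinarith [key]
    have := nonneg_of_mul_nonneg_right this (by positivity)
    linarith
  have k3 : f x - 1 / (2 * π) * ∫ t in (0:ℝ)..(2 * π), f t = B / (2 * π) := by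
    rw [hB]; field_simp
  rw [k3, div_pow, div_le_iff₀ (by positivity)]
  calc B ^ 2 ≤ _ := k2
    _ = _ := by ring

theorem hdR {f : ℝ → ℝ → ℝ} (hf : ContDiff ℝ (⊤ : ℕ∞) (Function.uncurry f)) (R θ : ℝ) :
    HasDerivAt (fun r => f r θ) (fderiv ℝ (Function.uncurry f) (R, θ) (1, 0)) R := by
  have h := (hf.differentiable (by simp) (R, θ)).hasFDerivAt
  exact h.comp_hasDerivAt (f := fun r => (r, θ)) R
    ((hasDerivAt_id R).prodMk (hasDerivAt_const R θ))

theorem hdT {f : ℝ → ℝ → ℝ} (hf : ContDiff ℝ (⊤ : ℕ∞) (Function.uncurry f)) (R θ : ℝ) :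
    HasDerivAt (fun t => f R t) (fderiv ℝ (Function.uncurry f) (R, θ) (0, 1)) θ := by
  have h := (hf.differentiable (by simp) (R, θ)).hasFDerivAt
  exact h.comp_hasDerivAt (f := fun t => (R, t)) θ
    ((hasDerivAt_const θ R).prodMk (hasDerivAt_id θ))

theorem pdR_eq {f : ℝ → ℝ → ℝ} (hf : ContDiff ℝ (⊤ : ℕ∞) (Function.uncurry f)) (R θ : ℝ) :
    pdR f R θ = fderiv ℝ (Function.uncurry f) (R, θ) (1, 0) := (hdR hf R θ).deriv

theorem pdT_eq {f : ℝ → ℝ → ℝ} (hf : ContDiff ℝ (⊤ : ℕ∞) (Function.uncurry f)) (R θ : ℝ) :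
    pdT f R θ = fderiv ℝ (Function.uncurry f) (R, θ) (0, 1) := (hdT hf R θ).deriv

theorem pdR_has {f : ℝ → ℝ → ℝ} (hf : ContDiff ℝ (⊤ : ℕ∞) (Function.uncurry f)) (R θ : ℝ) :
    HasDerivAt (fun r => f r θ) (pdR f R θ) R := by rw [pdR_eq hf]; exact hdR hf R θ

theorem pdT_has {f : ℝ → ℝ → ℝ} (hf : ContDiff ℝ (⊤ : ℕ∞) (Function.uncurry f)) (R θ : ℝ) :
    HasDerivAt (fun t => f R t) (pdT f R θ) θ := by rw [pdT_eq hf]; exact hdT hf R θ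

theorem pdR_cd {f : ℝ → ℝ → ℝ} (hf : ContDiff ℝ (⊤ : ℕ∞) (Function.uncurry f)) :
    ContDiff ℝ (⊤ : ℕ∞) (Function.uncurry (pdR f)) := by
  rw [show Function.uncurry (pdR f) = fun z => fderiv ℝ (Function.uncurry f) z (1, 0) from
    funext fun z => pdR_eq hf z.1 z.2]
  exact (hf.fderiv_right (m := (⊤ : ℕ∞)) (by simp)).clm_apply contDiff_const

theorem pdT_cd {f : ℝ → ℝ → ℝ} (hf : ContDiff ℝ (⊤ : ℕ∞) (Function.uncurry f)) :
    ContDiff ℝ (⊤ : ℕ∞) (Function.uncurry (pdT f)) := by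
  rw [show Function.uncurry (pdT f) = fun z => fderiv ℝ (Function.uncurry f) z (0, 1) from
    funext fun z => pdT_eq hf z.1 z.2]
  exact (hf.fderiv_right (m := (⊤ : ℕ∞)) (by simp)).clm_apply contDiff_const

theorem pd_comm {f : ℝ → ℝ → ℝ} (hf : ContDiff ℝ (⊤ : ℕ∞) (Function.uncurry f)) (R θ : ℝ) :
    pdR (pdT f) R θ = pdT (pdR f) R θ := by
  rw [pdR_eq (pdT_cd hf), pdT_eq (pdR_cd hf)]
  rw [show Function.uncurry (pdT f) = fun z => fderiv ℝ (Function.uncurry f) z (0, 1) from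
    funext fun z => pdT_eq hf z.1 z.2]
  rw [show Function.uncurry (pdR f) = fun z => fderiv ℝ (Function.uncurry f) z (1, 0) from
    funext fun z => pdR_eq hf z.1 z.2]
  have hd : DifferentiableAt ℝ (fderiv ℝ (Function.uncurry f)) (R, θ) :=
    (hf.fderiv_right (m := (⊤ : ℕ∞)) (by simp)).differentiable (by simp) _
  rw [fderiv_clm_apply hd (differentiableAt_const _), fderiv_clm_apply hd (differentiableAt_const _)]
  have hs : IsSymmSndFDerivAt ℝ (Function.uncurry f) (R, θ) :=
    hf.contDiffAt.isSymmSndFDerivAt (by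
      rw [minSmoothness_of_isRCLikeNormedField]; exact WithTop.coe_le_coe.2 le_top)
  have := hs (1, 0) (0, 1)
  simpa using this

theorem pdR_per {f : ℝ → ℝ → ℝ} (h : ∀ R θ, f R (θ + 2 * π) = f R θ) (R θ : ℝ) :
    pdR f R (θ + 2 * π) = pdR f R θ := by
  simp only [pdR, h]

theorem pdT_per {f : ℝ → ℝ → ℝ} (h : ∀ R θ, f R (θ + 2 * π) = f R θ) (R θ : ℝ) :
    pdT f R (θ + 2 * π) = pdT f R θ := by
  simp only [pdT]
  rw [← deriv_comp_add_const]
  simp only [h]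

theorem intZero (f f' : ℝ → ℝ) (hf : ∀ t, HasDerivAt f (f' t) t) (hf' : Continuous f')
    (hp : ∀ t, f (t + 2 * π) = f t) : ∫ t in (0:ℝ)..(2 * π), f' t = 0 := by
  rw [intervalIntegral.integral_eq_sub_of_hasDerivAt (fun t _ => hf t)
    (hf'.intervalIntegrable _ _)]
  have := hp 0
  rw [zero_add] at this
  rw [this, sub_self]

/-- The purely algebraic end of the argument. -/
theorem finalIneq (R P2 Q2 P X Y M m T : ℝ) (hR : 1 ≤ R) (hQ : 0 ≤ Q2)
    (hX : 0 ≤ X) (hY : 0 ≤ Y)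
    (hP : P ^ 2 ≤ 2 * π * P2)
    (E G : ℝ) (hE : E = P2 + Q2 - P / (2 * R) + π / (8 * R ^ 2) + (X + Y) / (4 * R ^ 2))
    (hG : G = 1 / R * (M - 1 / (2 * π) * m * P))
    (hM : |M - 1 / (2 * π) * m * P| ≤ 19 / 20 * E)
    (hT : T - 1 / (2 * π) * m * (X - Y) ≤ √Q2 * (X + Y)) (d : ℝ)
    (hd : d = -(2 * P2 + (Y / (2 * R ^ 2))) / R + P / R ^ 2 - (X - Y) / (4 * R ^ 3) - π / (4 * R ^ 3)
      - 1 / R ^ 2 * (M - 1 / (2 * π) * m * P)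
      + 1 / R * (P2 - Q2 - M / R + T / (2 * R ^ 2)
        - 1 / (2 * π) * (P * P + m * (- P / R + (X - Y) / (2 * R ^ 2))))) :
    0 ≤ E + G ∧ d ≤ -((E + G) / R) + 1000 * (E + G) / R ^ 2
      + 1000 * (E + G) ^ ((3:ℝ)/2) / R := by
  have hpi := Real.pi_pos
  have hR0 : 0 < R := by linarith
  have hV : 0 ≤ P2 - P / (2 * R) + π / (8 * R ^ 2) := by
    have h1 : 0 ≤ (P - π / (2 * R)) ^ 2 := sq_nonneg _
    have h2 : (P - π / (2 * R)) ^ 2 = P ^ 2 - 2 * π * (P / (2 * R) - π / (8 * R ^ 2)) := by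
      field_simp; ring
    have h3 : 0 ≤ 2 * π * (P2 - P / (2 * R) + π / (8 * R ^ 2)) := by nlinarith
    exact nonneg_of_mul_nonneg_right h3 (by positivity)
  have hXY : 0 ≤ (X + Y) / (4 * R ^ 2) := by positivity
  have hQE : Q2 ≤ E := by linarith
  have hXE : (X + Y) / (4 * R ^ 2) ≤ E := by linarith
  have hE0 : 0 ≤ E := by linarith
  have hGa : |G| ≤ 19 / 20 * E / R := by
    rw [hG, abs_mul, abs_of_pos (by positivity : (0:ℝ) < 1 / R), one_div, inv_mul_eq_div]
    gcongr
  have hGb : |G| ≤ 19 / 20 * E := hGa.trans (div_le_self (by positivity) hR)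
  have hEG : E ≤ 20 * (E + G) := by linarith [neg_abs_le G]
  have hEG0 : 0 ≤ E + G := by linarith
  refine ⟨hEG0, ?_⟩
  -- the exact derivative
  have hvar : P2 - 1 / (2 * π) * P ^ 2 ≤ P2 - P / (2 * R) + π / (8 * R ^ 2) := by
    have h2 : 1 / (2 * π) * (P - π / (2 * R)) ^ 2
        = 1 / (2 * π) * P ^ 2 - P / (2 * R) + π / (8 * R ^ 2) := by
      field_simp; ring
    have : 0 ≤ 1 / (2 * π) * (P - π / (2 * R)) ^ 2 := by positivity
    linarith
  have hd2 : d = -((E + G) / R) - G / R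
      + 1 / R * ((P2 - 1 / (2 * π) * P ^ 2) - (P2 - P / (2 * R) + π / (8 * R ^ 2)))
      + 1 / (2 * R ^ 3) * (T - 1 / (2 * π) * m * (X - Y)) := by
    rw [hd, hE, hG]; field_simp; ring
  have t1 : 1 / R * ((P2 - 1 / (2 * π) * P ^ 2) - (P2 - P / (2 * R) + π / (8 * R ^ 2))) ≤ 0 :=
    mul_nonpos_of_nonneg_of_nonpos (by positivity) (by linarith)
  have t2 : -(G / R) ≤ 1000 * (E + G) / R ^ 2 := by
    have : -G ≤ 1000 * (E + G) / R := by
      calc -G ≤ |G| := neg_le_abs G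
        _ ≤ 19 / 20 * E / R := hGa
        _ ≤ 1000 * (E + G) / R := div_le_div_of_nonneg_right (by linarith) hR0.le
    calc -(G / R) = (-G) / R := by ring
      _ ≤ (1000 * (E + G) / R) / R := by gcongr
      _ = _ := by field_simp
  have t3 : 1 / (2 * R ^ 3) * (T - 1 / (2 * π) * m * (X - Y))
      ≤ 1000 * (E + G) ^ ((3:ℝ)/2) / R := by
    have hpow : (E + G) ^ ((3:ℝ)/2) = (E + G) * √(E + G) := by
      rw [show (3:ℝ)/2 = 1 + 1/2 by norm_num, Real.rpow_add_of_nonneg hEG0 (by norm_num)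
        (by norm_num), Real.rpow_one, Real.sqrt_eq_rpow]
    have hs : √Q2 ≤ 5 * √(E + G) := by
      rw [show (5:ℝ) = √25 by rw [show (25:ℝ) = 5 ^ 2 by norm_num]; simp, ← Real.sqrt_mul (by norm_num)]
      apply Real.sqrt_le_sqrt; linarith
    calc 1 / (2 * R ^ 3) * (T - 1 / (2 * π) * m * (X - Y))
        ≤ 1 / (2 * R ^ 3) * (√Q2 * (X + Y)) := by gcongr
      _ = 2 * (√Q2 * ((X + Y) / (4 * R ^ 2))) / R := by field_simp; ring
      _ ≤ 2 * ((5 * √(E + G)) * (20 * (E + G))) / R := by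
          exact div_le_div_of_nonneg_right (mul_le_mul_of_nonneg_left
            (mul_le_mul hs (by linarith) hXY (by positivity)) (by norm_num)) hR0.le
      _ ≤ 1000 * (E + G) ^ ((3:ℝ)/2) / R := by
          rw [hpow]
          apply div_le_div_of_nonneg_right _ hR0.le
          nlinarith [mul_nonneg hEG0 (Real.sqrt_nonneg (E + G))]
  rw [hd2]; linarith

set_option maxHeartbeats 4000000 in
theorem stmt8
    (R₀ : ℝ) (hR₀ : 0 < R₀)
    (U A : ℝ → ℝ → ℝ)
    (hU : ContDiff ℝ (⊤ : ℕ∞) (Function.uncurry U))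
    (hA : ContDiff ℝ (⊤ : ℕ∞) (Function.uncurry A))
    (hUper : ∀ R θ, U R (θ + 2 * π) = U R θ)
    (hAper : ∀ R θ, A R (θ + 2 * π) = A R θ)
    (eqU : ∀ R, R₀ ≤ R → ∀ θ : ℝ,
      deriv (fun r => r * pdR U r θ) R - deriv (fun t => R * pdT U R t) θ
        = exp (4 * U R θ) / (2 * R) * ((pdR A R θ) ^ 2 - (pdT A R θ) ^ 2))
    (eqA : ∀ R, R₀ ≤ R → ∀ θ : ℝ,
      deriv (fun r => r⁻¹ * pdR A r θ) R - deriv (fun t => R⁻¹ * pdT A R t) θ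
        = 4 / R * (-(pdR U R θ * pdR A R θ) + pdT U R θ * pdT A R θ))
    (Eb : ℝ → ℝ → ℝ)
    (hEb : ∀ b R, Eb b R = ∫ θ in (0:ℝ)..(2 * π),
      (pdR U R θ - b / R) ^ 2 + (pdT U R θ) ^ 2
        + exp (4 * U R θ) / (4 * R ^ 2) * ((pdR A R θ) ^ 2 + (pdT A R θ) ^ 2))
    (avgU : ℝ → ℝ)
    (havgU : ∀ R, avgU R = 1 / (2 * π) * ∫ θ in (0:ℝ)..(2 * π), U R θ)
    (G : ℝ → ℝ)
    (hG : ∀ R, G R = 1 / R * ∫ θ in (0:ℝ)..(2 * π), (U R θ - avgU R) * pdR U R θ)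
    (Ehat : ℝ → ℝ)
    (hEhat : ∀ R, Ehat R = Eb (1/4) R + G R) :
    ∃ K : ℝ, 0 < K ∧ ∀ R, max R₀ 1 ≤ R →
      0 ≤ Ehat R ∧ ∃ d : ℝ, HasDerivWithinAt Ehat d (Set.Ici R₀) R
        ∧ d ≤ -(Ehat R / R) + K * Ehat R / R ^ 2 + K * Ehat R ^ ((3:ℝ)/2) / R := by
  have hpi := Real.pi_pos
  -- smoothness bookkeeping
  have sUR := pdR_cd hU
  have sUT := pdT_cd hU
  have sAR := pdR_cd hA
  have sAT := pdT_cd hA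
  have c0 := hU.continuous
  have cp := sUR.continuous
  have cq := sUT.continuous
  have cx := sAR.continuous
  have cy := sAT.continuous
  have cpR := (pdR_cd sUR).continuous
  have cpT := (pdT_cd sUR).continuous
  have cqT := (pdT_cd sUT).continuous
  have cxR := (pdR_cd sAR).continuous
  have cxT := (pdT_cd sAR).continuous
  have cyT := (pdT_cd sAT).continuous
  have dUR := pdR_has hU
  have dUT := pdT_has hU
  have dpR := pdR_has sUR
  have dpT := pdT_has sUR
  have dxR := pdR_has sAR
  have dxT := pdT_has sAR
  have dqT := pdT_has sUT
  have dyT := pdT_has sAT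
  have dqR : ∀ R θ, HasDerivAt (fun r => pdT U r θ) (pdT (pdR U) R θ) R := fun R θ => by
    rw [← pd_comm hU]; exact pdR_has sUT R θ
  have dyR : ∀ R θ, HasDerivAt (fun r => pdT A r θ) (pdT (pdR A) R θ) R := fun R θ => by
    rw [← pd_comm hA]; exact pdR_has sAT R θ
  have perp := pdR_per hUper
  have perq := pdT_per hUper
  have perx := pdR_per hAper
  have pery := pdT_per hAper
  -- the equations in expanded form
  have wU : ∀ R, R₀ ≤ R → ∀ θ, pdR (pdR U) R θ = pdT (pdT U) R θ - pdR U R θ / R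
      + exp (4 * U R θ) / (2 * R ^ 2) * (pdR A R θ ^ 2 - pdT A R θ ^ 2) := by
    intro R hR θ
    have hR0 : 0 < R := lt_of_lt_of_le hR₀ hR
    have h := eqU R hR θ
    have h1 : deriv (fun r => r * pdR U r θ) R = 1 * pdR U R θ + R * pdR (pdR U) R θ :=
      ((hasDerivAt_id' R).mul (dpR R θ)).deriv
    have h2 : deriv (fun t => R * pdT U R t) θ = R * pdT (pdT U) R θ :=
      ((dqT R θ).const_mul R).deriv
    rw [h1, h2] at h
    field_simp at h ⊢
    linear_combination h
  have wA : ∀ R, R₀ ≤ R → ∀ θ, pdR (pdR A) R θ = pdT (pdT A) R θ + pdR A R θ / R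
      + 4 * (-(pdR U R θ * pdR A R θ) + pdT U R θ * pdT A R θ) := by
    intro R hR θ
    have hR0 : 0 < R := lt_of_lt_of_le hR₀ hR
    have h := eqA R hR θ
    have h1 : deriv (fun r => r⁻¹ * pdR A r θ) R
        = (-(R ^ 2)⁻¹) * pdR A R θ + R⁻¹ * pdR (pdR A) R θ :=
      ((hasDerivAt_inv hR0.ne').mul (dxR R θ)).deriv
    have h2 : deriv (fun t => R⁻¹ * pdT A R t) θ = R⁻¹ * pdT (pdT A) R θ :=
      ((dyT R θ).const_mul R⁻¹).deriv
    rw [h1, h2] at h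
    field_simp at h ⊢
    linear_combination h
  -- slices
  have sl : ∀ {f : ℝ → ℝ → ℝ}, Continuous (Function.uncurry f) → ∀ R, Continuous (f R) :=
    fun h R => h.comp (by fun_prop : Continuous fun t : ℝ => (R, t))
  -- formula for Ehat
  have hform : ∀ r, Ehat r = (∫ θ in (0:ℝ)..(2 * π), pdR U r θ ^ 2 + pdT U r θ ^ 2)
      - (1 / 2) * (r⁻¹ * ∫ θ in (0:ℝ)..(2 * π), pdR U r θ) + π / 8 * (r⁻¹ * r⁻¹)
      + 1 / 4 * (r⁻¹ * r⁻¹ * ∫ θ in (0:ℝ)..(2 * π), exp (4 * U r θ) * (pdR A r θ ^ 2 + pdT A r θ ^ 2))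
      + r⁻¹ * ((∫ θ in (0:ℝ)..(2 * π), U r θ * pdR U r θ)
        - 1 / (2 * π) * ((∫ θ in (0:ℝ)..(2 * π), U r θ) * ∫ θ in (0:ℝ)..(2 * π), pdR U r θ)) := by
    intro r
    have k0 := sl c0 r
    have kp := sl cp r
    have kq := sl cq r
    have kx := sl cx r
    have ky := sl cy r
    rw [hEhat, hEb, hG]
    rw [lin4 1 (-(1 / 2) * r⁻¹) (1 / 16 * (r⁻¹ * r⁻¹)) (1 / 4 * (r⁻¹ * r⁻¹))
      (fun θ => pdR U r θ ^ 2 + pdT U r θ ^ 2) (fun θ => pdR U r θ) (fun _ => 1)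
      (fun θ => exp (4 * U r θ) * (pdR A r θ ^ 2 + pdT A r θ ^ 2)) _
      (by fun_prop) (by fun_prop) (by fun_prop) (by fun_prop) (fun t => by ring)]
    rw [lin4 1 (-avgU r) 0 0
      (fun θ => U r θ * pdR U r θ) (fun θ => pdR U r θ) (fun _ => 1) (fun _ => 1)
      (fun θ => (U r θ - avgU r) * pdR U r θ)
      (by fun_prop) (by fun_prop) (by fun_prop) (by fun_prop) (fun t => by ring)]
    rw [havgU, intervalIntegral.integral_const]
    simp only [smul_eq_mul]
    ring
  refine ⟨1000, by norm_num, fun R hRm => ?_⟩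
  have hRR : R₀ ≤ R := (le_max_left _ _).trans hRm
  have hR1 : 1 ≤ R := (le_max_right _ _).trans hRm
  have hR0 : 0 < R := by linarith
  have k0 := sl c0 R
  have kp := sl cp R
  have kq := sl cq R
  have kx := sl cx R
  have ky := sl cy R
  have kpR := sl cpR R
  have kpT := sl cpT R
  have kqT := sl cqT R
  have kxR := sl cxR R
  have kxT := sl cxT R
  have kyT := sl cyT R
  have dE : ∀ r θ, HasDerivAt (fun r => exp (4 * U r θ)) (exp (4 * U r θ) * (4 * pdR U r θ)) r :=
    fun r θ => ((dUR r θ).const_mul 4).exp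
  have dET : ∀ r θ, HasDerivAt (fun t => exp (4 * U r t)) (exp (4 * U r θ) * (4 * pdT U r θ)) θ :=
    fun r θ => ((dUT r θ).const_mul 4).exp
  -- derivatives of the five integrals
  have D1 := diffInt (fun r θ => pdR U r θ ^ 2 + pdT U r θ ^ 2)
    (fun r θ => 2 * pdR U r θ * pdR (pdR U) r θ + 2 * pdT U r θ * pdT (pdR U) r θ)
    (by simp only [Function.uncurry_def] at cp cq ⊢; fun_prop)
    (by simp only [Function.uncurry_def] at cp cq cpR cpT ⊢; fun_prop)
    (fun r θ => (((dpR r θ).fun_pow 2).add ((dqR r θ).fun_pow 2)).congr_deriv (by simp)) R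
  have D2 := diffInt (fun r θ => pdR U r θ) (fun r θ => pdR (pdR U) r θ) cp cpR dpR R
  have D3 := diffInt (fun r θ => exp (4 * U r θ) * (pdR A r θ ^ 2 + pdT A r θ ^ 2))
    (fun r θ => exp (4 * U r θ) * (4 * pdR U r θ) * (pdR A r θ ^ 2 + pdT A r θ ^ 2)
      + exp (4 * U r θ) * (2 * pdR A r θ * pdR (pdR A) r θ + 2 * pdT A r θ * pdT (pdR A) r θ))
    (by simp only [Function.uncurry_def] at c0 cx cy ⊢; fun_prop)
    (by simp only [Function.uncurry_def] at c0 cp cx cy cxR cxT ⊢; fun_prop)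
    (fun r θ => ((dE r θ).mul (((dxR r θ).fun_pow 2).add ((dyR r θ).fun_pow 2))).congr_deriv
      (by simp)) R
  have D4 := diffInt (fun r θ => U r θ * pdR U r θ)
    (fun r θ => pdR U r θ * pdR U r θ + U r θ * pdR (pdR U) r θ)
    (c0.mul cp) ((cp.mul cp).add (c0.mul cpR)) (fun r θ => (dUR r θ).mul (dpR r θ)) R
  have D5 := diffInt (fun r θ => U r θ) (fun r θ => pdR U r θ) c0 cp dUR R
  have Di := hasDerivAt_inv hR0.ne'
  have DD := ((((D1.fun_sub ((Di.fun_mul D2).const_mul (1 / 2))).fun_add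
    ((Di.fun_mul Di).const_mul (π / 8))).fun_add
    (((Di.fun_mul Di).fun_mul D3).const_mul (1 / 4))).fun_add
    (Di.fun_mul (D4.fun_sub ((D5.fun_mul D2).const_mul (1 / (2 * π))))))
  -- integrations by parts
  have Z1 := intZero (fun θ => pdR U R θ * pdT U R θ)
    (fun θ => pdT (pdR U) R θ * pdT U R θ + pdR U R θ * pdT (pdT U) R θ)
    (fun θ => (dpT R θ).mul (dqT R θ)) (by fun_prop) (fun θ => by simp only [perp, perq])
  have Z2 := intZero (fun θ => exp (4 * U R θ) * (pdR A R θ * pdT A R θ))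
    (fun θ => exp (4 * U R θ) * (4 * pdT U R θ) * (pdR A R θ * pdT A R θ)
      + exp (4 * U R θ) * (pdT (pdR A) R θ * pdT A R θ + pdR A R θ * pdT (pdT A) R θ))
    (fun θ => (dET R θ).mul ((dxT R θ).mul (dyT R θ))) (by fun_prop)
    (fun θ => by simp only [perx, pery, hUper])
  have Z3 := intZero (fun θ => pdT U R θ) (fun θ => pdT (pdT U) R θ)
    (fun θ => dqT R θ) (by fun_prop) (fun θ => perq R θ)
  have Z4 := intZero (fun θ => U R θ * pdT U R θ)
    (fun θ => pdT U R θ * pdT U R θ + U R θ * pdT (pdT U) R θ)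
    (fun θ => (dUT R θ).mul (dqT R θ)) (by fun_prop) (fun θ => by simp only [hUper, perq])
  -- base integrals
  obtain ⟨P2, hP2⟩ : ∃ z, z = ∫ θ in (0:ℝ)..(2 * π), pdR U R θ ^ 2 := ⟨_, rfl⟩
  obtain ⟨Q2, hQ2⟩ : ∃ z, z = ∫ θ in (0:ℝ)..(2 * π), pdT U R θ ^ 2 := ⟨_, rfl⟩
  obtain ⟨P, hP⟩ : ∃ z, z = ∫ θ in (0:ℝ)..(2 * π), pdR U R θ := ⟨_, rfl⟩
  obtain ⟨X, hX⟩ : ∃ z, z = ∫ θ in (0:ℝ)..(2 * π), exp (4 * U R θ) * pdR A R θ ^ 2 := ⟨_, rfl⟩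
  obtain ⟨Y, hY⟩ : ∃ z, z = ∫ θ in (0:ℝ)..(2 * π), exp (4 * U R θ) * pdT A R θ ^ 2 := ⟨_, rfl⟩
  obtain ⟨Z, hZ⟩ : ∃ z, z = ∫ θ in (0:ℝ)..(2 * π), pdR U R θ * (exp (4 * U R θ) *
    (pdR A R θ ^ 2 - pdT A R θ ^ 2)) := ⟨_, rfl⟩
  obtain ⟨T, hT⟩ : ∃ z, z = ∫ θ in (0:ℝ)..(2 * π), U R θ * (exp (4 * U R θ) *
    (pdR A R θ ^ 2 - pdT A R θ ^ 2)) := ⟨_, rfl⟩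
  obtain ⟨M, hM⟩ : ∃ z, z = ∫ θ in (0:ℝ)..(2 * π), U R θ * pdR U R θ := ⟨_, rfl⟩
  obtain ⟨m, hm⟩ : ∃ z, z = ∫ θ in (0:ℝ)..(2 * π), U R θ := ⟨_, rfl⟩
  have hI1 : (∫ θ in (0:ℝ)..(2 * π), pdR U R θ ^ 2 + pdT U R θ ^ 2) = P2 + Q2 := by
    rw [lin4 1 1 0 0 (fun θ => pdR U R θ ^ 2) (fun θ => pdT U R θ ^ 2) (fun _ => 1) (fun _ => 1) _
      (by fun_prop) (by fun_prop) (by fun_prop) (by fun_prop) (fun t => by ring), hP2, hQ2]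
    ring
  have hI3 : (∫ θ in (0:ℝ)..(2 * π), exp (4 * U R θ) * (pdR A R θ ^ 2 + pdT A R θ ^ 2)) = X + Y := by
    rw [lin4 1 1 0 0 (fun θ => exp (4 * U R θ) * pdR A R θ ^ 2)
      (fun θ => exp (4 * U R θ) * pdT A R θ ^ 2) (fun _ => 1) (fun _ => 1) _
      (by fun_prop) (by fun_prop) (by fun_prop) (by fun_prop) (fun t => by ring), hX, hY]
    ring
  have hJ1 : (∫ θ in (0:ℝ)..(2 * π), 2 * pdR U R θ * pdR (pdR U) R θ + 2 * pdT U R θ * pdT (pdR U) R θ)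
      = -2 * P2 / R + Z / R ^ 2 := by
    rw [lin4 (-2 / R) (1 / R ^ 2) 2 0 (fun θ => pdR U R θ ^ 2) (fun θ => pdR U R θ *
      (exp (4 * U R θ) * (pdR A R θ ^ 2 - pdT A R θ ^ 2)))
      (fun θ => pdT (pdR U) R θ * pdT U R θ + pdR U R θ * pdT (pdT U) R θ) (fun _ => 1) _
      (by fun_prop) (by fun_prop) (by fun_prop) (by fun_prop)
      (fun t => by rw [wU R hRR]; field_simp; ring), Z1, hP2, hZ]
    ring
  have hJ2 : (∫ θ in (0:ℝ)..(2 * π), pdR (pdR U) R θ) = -P / R + (X - Y) / (2 * R ^ 2) := by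
    rw [lin4 (-1 / R) (1 / (2 * R ^ 2)) (-1 / (2 * R ^ 2)) 1 (fun θ => pdR U R θ)
      (fun θ => exp (4 * U R θ) * pdR A R θ ^ 2)
      (fun θ => exp (4 * U R θ) * pdT A R θ ^ 2) (fun θ => pdT (pdT U) R θ) _
      (by fun_prop) (by fun_prop) (by fun_prop) (by fun_prop)
      (fun t => by rw [wU R hRR]; field_simp; ring), Z3, hP, hX, hY]
    ring
  have hJ3 : (∫ θ in (0:ℝ)..(2 * π), exp (4 * U R θ) * (4 * pdR U R θ) * (pdR A R θ ^ 2 + pdT A R θ ^ 2)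
      + exp (4 * U R θ) * (2 * pdR A R θ * pdR (pdR A) R θ + 2 * pdT A R θ * pdT (pdR A) R θ))
      = -4 * Z + 2 * X / R := by
    rw [lin4 (-4) (2 / R) 2 0 (fun θ => pdR U R θ *
      (exp (4 * U R θ) * (pdR A R θ ^ 2 - pdT A R θ ^ 2)))
      (fun θ => exp (4 * U R θ) * pdR A R θ ^ 2)
      (fun θ => exp (4 * U R θ) * (4 * pdT U R θ) * (pdR A R θ * pdT A R θ)
      + exp (4 * U R θ) * (pdT (pdR A) R θ * pdT A R θ + pdR A R θ * pdT (pdT A) R θ))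
      (fun _ => 1) _
      (by fun_prop) (by fun_prop) (by fun_prop) (by fun_prop)
      (fun t => by rw [wA R hRR]; field_simp; ring), Z2, hZ, hX]
    ring
  have hJ4 : (∫ θ in (0:ℝ)..(2 * π), pdR U R θ * pdR U R θ + U R θ * pdR (pdR U) R θ)
      = P2 - Q2 - M / R + T / (2 * R ^ 2) := by
    have := lin4 1 (-1 / R) (1 / (2 * R ^ 2)) 1
      (fun θ => pdR U R θ ^ 2 - pdT U R θ ^ 2) (fun θ => U R θ * pdR U R θ)
      (fun θ => U R θ * (exp (4 * U R θ) * (pdR A R θ ^ 2 - pdT A R θ ^ 2)))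
      (fun θ => pdT U R θ * pdT U R θ + U R θ * pdT (pdT U) R θ)
      (fun θ => pdR U R θ * pdR U R θ + U R θ * pdR (pdR U) R θ)
      (by fun_prop) (by fun_prop) (by fun_prop) (by fun_prop)
      (fun t => by rw [wU R hRR]; field_simp; ring)
    rw [this, Z4, ← hM, ← hT]
    rw [lin4 1 (-1) 0 0 (fun θ => pdR U R θ ^ 2) (fun θ => pdT U R θ ^ 2) (fun _ => 1) (fun _ => 1)
      (fun θ => pdR U R θ ^ 2 - pdT U R θ ^ 2)
      (by fun_prop) (by fun_prop) (by fun_prop) (by fun_prop) (fun t => by ring), ← hP2, ← hQ2]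
    ring
  have hRform := hform R
  rw [hI1, hI3, ← hP, ← hM, ← hm] at hRform
  rw [show (fun r => _) = Ehat from funext fun r => (hform r).symm] at DD
  rw [hI3, hJ1, hJ2, hJ3, hJ4, ← hP, ← hM, ← hm] at DD
  -- estimates
  have hX0 : 0 ≤ X := by
    rw [hX]; exact intervalIntegral.integral_nonneg (by positivity) fun t _ => by positivity
  have hY0 : 0 ≤ Y := by
    rw [hY]; exact intervalIntegral.integral_nonneg (by positivity) fun t _ => by positivity
  have hQ0 : 0 ≤ Q2 := by
    rw [hQ2]; exact intervalIntegral.integral_nonneg (by positivity) fun t _ => by positivity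
  have hW : ∀ t, (U R t - 1 / (2 * π) * m) ^ 2 ≤ π / 6 * Q2 := fun t => by
    rw [hm, hQ2]; exact wirt (fun t => U R t) (fun t => pdT U R t) (dUT R) kq (hUper R) t
  have hWs : ∀ t, |U R t - 1 / (2 * π) * m| ≤ √Q2 := fun t => by
    apply Real.abs_le_sqrt
    refine (hW t).trans ?_
    nlinarith [Real.pi_lt_d2]
  have hCS : P ^ 2 ≤ 2 * π * P2 := by
    have h := intMono (fun _ => 0) (fun t => (2 * π * pdR U R t - P) ^ 2) (by fun_prop)
      (by fun_prop) (fun t => sq_nonneg _)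
    rw [lin4 ((2 * π) ^ 2) (-(2 * (2 * π) * P)) (P ^ 2) 0 (fun θ => pdR U R θ ^ 2)
      (fun θ => pdR U R θ) (fun _ => 1) (fun _ => 1) (fun t => (2 * π * pdR U R t - P) ^ 2)
      (by fun_prop) (by fun_prop) (by fun_prop) (by fun_prop) (fun t => by ring), ← hP2, ← hP] at h
    simp only [intervalIntegral.integral_const, smul_eq_mul] at h
    have : 0 ≤ (2 * π) * (2 * π * P2 - P ^ 2) := by linarith
    linarith [nonneg_of_mul_nonneg_right this (by positivity)]
  have hTb : T - 1 / (2 * π) * m * (X - Y) ≤ √Q2 * (X + Y) := by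
    have h := intMono (fun t => (U R t - 1 / (2 * π) * m) *
        (exp (4 * U R t) * (pdR A R t ^ 2 - pdT A R t ^ 2)))
      (fun t => √Q2 * (exp (4 * U R t) * (pdR A R t ^ 2 + pdT A R t ^ 2)))
      (by fun_prop) (by fun_prop) (fun t => by
        have e0 := (exp_pos (4 * U R t)).le
        have a1 := hWs t
        calc _ ≤ |(U R t - 1 / (2 * π) * m) *
              (exp (4 * U R t) * (pdR A R t ^ 2 - pdT A R t ^ 2))| := le_abs_self _
          _ = |U R t - 1 / (2 * π) * m| *
              (exp (4 * U R t) * |pdR A R t ^ 2 - pdT A R t ^ 2|) := by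
            rw [abs_mul, abs_mul, abs_of_nonneg e0]
          _ ≤ _ := by
            have : |pdR A R t ^ 2 - pdT A R t ^ 2| ≤ pdR A R t ^ 2 + pdT A R t ^ 2 := by
              rw [abs_le]; constructor <;> nlinarith [sq_nonneg (pdR A R t), sq_nonneg (pdT A R t)]
            gcongr)
    rw [intervalIntegral.integral_const_mul, hI3] at h
    rw [lin4 1 (-(1 / (2 * π) * m)) (1 / (2 * π) * m) 0 (fun θ => U R θ * (exp (4 * U R θ) *
      (pdR A R θ ^ 2 - pdT A R θ ^ 2))) (fun θ => exp (4 * U R θ) * pdR A R θ ^ 2)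
      (fun θ => exp (4 * U R θ) * pdT A R θ ^ 2) (fun _ => 1) (fun t => (U R t - 1 / (2 * π) * m) *
        (exp (4 * U R t) * (pdR A R t ^ 2 - pdT A R t ^ 2)))
      (by fun_prop) (by fun_prop) (by fun_prop) (by fun_prop) (fun t => by ring),
      ← hT, ← hX, ← hY] at h
    linarith
  have hXY : 0 ≤ (X + Y) / (4 * R ^ 2) := by positivity
  -- the bound on the correction term, both signs
  have hMs : ∀ s : ℝ, s ^ 2 = 1 → s * (M - 1 / (2 * π) * m * P)
      ≤ 19 / 20 * (P2 + Q2 - P / (2 * R) + π / (8 * R ^ 2)) := by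
    intro s hs
    have h := intMono
      (fun t => s * ((U R t - 1 / (2 * π) * m) * (pdR U R t - 1 / (4 * R))))
      (fun t => (5 / 18) * (π / 6 * Q2) + (9 / 10) * (pdR U R t - 1 / (4 * R)) ^ 2)
      (by fun_prop) (by fun_prop) (fun t => by
        have a1 := hW t
        generalize U R t - 1 / (2 * π) * m = w at *
        generalize pdR U R t - 1 / (4 * R) = v at *
        have a2 := sq_nonneg (5 * w - 9 * s * v)
        have a3 : (5 * w - 9 * s * v) ^ 2 = 25 * w ^ 2 - 90 * (s * (w * v)) + 81 * v ^ 2 := by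
          linear_combination 81 * v ^ 2 * hs
        show s * (w * v) ≤ _
        linarith)
    rw [lin4 s (-(s * (1 / (4 * R)))) (-(s * (1 / (2 * π) * m)))
      (s * (1 / (2 * π) * m) * (1 / (4 * R))) (fun t => U R t * pdR U R t) (fun t => U R t)
      (fun t => pdR U R t) (fun _ => 1)
      (fun t => s * ((U R t - 1 / (2 * π) * m) * (pdR U R t - 1 / (4 * R))))
      (by fun_prop) (by fun_prop) (by fun_prop) (by fun_prop) (fun t => by ring),
      ← hM, ← hm, ← hP] at h
    rw [lin4 (9 / 10) (-(9 / 20) * (1 / R)) ((5 / 18) * (π / 6 * Q2) + 9 / 160 * (1 / R ^ 2)) 0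
      (fun t => pdR U R t ^ 2)
      (fun t => pdR U R t) (fun _ => 1) (fun _ => 1)
      (fun t => (5 / 18) * (π / 6 * Q2) + (9 / 10) * (pdR U R t - 1 / (4 * R)) ^ 2)
      (by fun_prop) (by fun_prop) (by fun_prop) (by fun_prop) (fun t => by field_simp; ring),
      ← hP2, ← hP] at h
    simp only [intervalIntegral.integral_const, smul_eq_mul] at h
    have hV : 0 ≤ P2 - P / (2 * R) + π / (8 * R ^ 2) := by
      have h1 : 0 ≤ (P - π / (2 * R)) ^ 2 := sq_nonneg _
      have h2 : (P - π / (2 * R)) ^ 2 = P ^ 2 - 2 * π * (P / (2 * R) - π / (8 * R ^ 2)) := by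
        field_simp; ring
      rw [h2] at h1
      have h3 : 0 ≤ 2 * π * (P2 - P / (2 * R) + π / (8 * R ^ 2)) := by linarith
      exact nonneg_of_mul_nonneg_right h3 (by positivity)
    have h4 : s * (M - 1 / (2 * π) * m * P) ≤ 5 / 54 * π ^ 2 * Q2
        + 9 / 10 * (P2 - P / (2 * R) + π / (8 * R ^ 2)) := by
      refine le_trans (le_of_eq ?_) (h.trans (le_of_eq ?_))
      · field_simp; ring
      · field_simp; ring
    have h5 : π ^ 2 ≤ 10 := by nlinarith [Real.pi_lt_d2]
    have h6 := mul_le_mul_of_nonneg_right h5 hQ0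
    linarith
  have hMb : |M - 1 / (2 * π) * m * P| ≤ 19 / 20 *
      (P2 + Q2 - P / (2 * R) + π / (8 * R ^ 2) + (X + Y) / (4 * R ^ 2)) := by
    rw [abs_le]
    have h1 := hMs 1 (by norm_num)
    have h2 := hMs (-1) (by norm_num)
    constructor <;> linarith
  have fin := finalIneq R P2 Q2 P X Y M m T hR1 hQ0 hX0 hY0 hCS _ _ rfl rfl hMb hTb _ rfl
  have hEq : Ehat R = P2 + Q2 - P / (2 * R) + π / (8 * R ^ 2) + (X + Y) / (4 * R ^ 2)
      + 1 / R * (M - 1 / (2 * π) * m * P) := by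
    rw [hRform]; field_simp
  rw [hEq]
  refine ⟨fin.1, _, ?_, fin.2⟩
  refine (DD.congr_deriv ?_).hasDerivWithinAt
  field_simp
  ring
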